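/- Let H ∈ ℂ^{N×M}, ρ > 0, α ∈ (0,1), and define the quantized uplink capacity set function R(K) = log₂ det( I_{|K|} + ρ·α·(D_K)⁻¹·H_K·H_Kᴴ ) for K ⊆ {1,…,N}, where D is the diagonal matrix with entries d_i = 1 + ρ(1−α)·‖f_i‖² and f_iᴴ is the i-th row of H. Let N_r ≤ N and let K_G be the subset produced by greedy selection: K₀ = ∅ and K_{t+1} = K_t ∪ {j_t}, where j_t maximizes R(K_t ∪ {j}) over j ∈ {1,…,N} \ K_t, with K_G = K_{N_r}. Then R(K_G) ≥ (1 − 1/e) · R(K*), where K* maximizes R(K) over all subsets K with |K| = N_r. -/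

import Mathlib

open Matrix

/-- The row submatrix of `H` given by the rows indexed by the subset `K`. -/
noncomputable def stmt11.rowSub {N M : ℕ} (H : Matrix (Fin N) (Fin M) ℂ)
    (K : Finset (Fin N)) : Matrix K (Fin M) ℂ :=
  H.submatrix (fun i => (i : Fin N)) id

/-- The quantized uplink capacity `R(K) = log₂ det(I + ρα (D_K)⁻¹ H_K H_Kᴴ)`, where `D` is the
diagonal matrix with entries `dᵢ`. -/
noncomputable def stmt11.R {N M : ℕ} (H : Matrix (Fin N) (Fin M) ℂ) (ρ α : ℝ)
    (d : Fin N → ℝ) (K : Finset (Fin N)) : ℝ :=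
  Real.logb 2 ((Matrix.det
    ((1 : Matrix K K ℂ) + ((ρ : ℂ) * (α : ℂ)) •
      (Matrix.diagonal (fun i : K => ((d i.1 : ℝ) : ℂ)))⁻¹ *
      (stmt11.rowSub H K * (stmt11.rowSub H K)ᴴ))).re)

/-! `R` is monotone and submodular, and the greedy algorithm is a `(1 - 1/e)`-approximation for any
such set function (Nemhauser–Wolsey–Fisher). For the first point, Sylvester's identity
`det (1 + AB) = det (1 + BA)` turns `R(K)` into `log₂ det (1 + ∑ i ∈ K, Pᵢ)` with fixed positive
semidefinite `Pᵢ`, and the matrix determinant lemma expresses `det (X + CᴴC) / det X` as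
`det (1 + C X⁻¹ Cᴴ)`, which is at least `1` and antitone in `X` because inversion is antitone.
For the second, by submodularity the best single addition closes at least a fraction `1/n` of the
gap to a competitor with `n` elements, so the gap shrinks by `(1 - 1/n)ⁿ ≤ 1/e`. -/

section Greedy

variable {ι F : Type*} [DecidableEq ι]

/-- A set function is submodular if `f (A ∪ B) + f (A ∩ B) ≤ f A + f B`. The lattice form is used
rather than diminishing marginal gains, to which it is equivalent on finite sets. -/
def IsSubmodular [Add F] [LE F] (f : Finset ι → F) : Prop :=
  ∀ A B, f (A ∪ B) + f (A ∩ B) ≤ f A + f B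

/-- `K 0, …, K n` is a run of `n` steps of the greedy algorithm maximizing `f`: each step adds a new
element for which the value of `f` is largest. Ties are broken arbitrarily, and nothing is said
about `K t` for `t > n`. -/
structure IsGreedyRun [LE F] (f : Finset ι → F) (n : ℕ) (K : ℕ → Finset ι) : Prop where
  zero : K 0 = ∅
  step : ∀ t < n, ∃ j ∉ K t, K (t + 1) = insert j (K t) ∧
    ∀ j' ∉ K t, f (insert j' (K t)) ≤ f (insert j (K t))

theorem IsGreedyRun.le_succ [Preorder F] {f : Finset ι → F} {n : ℕ} {K : ℕ → Finset ι}
    (hK : IsGreedyRun f n K) (hmono : Monotone f) {t : ℕ} (ht : t < n) :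
    f (K t) ≤ f (K (t + 1)) := by
  obtain ⟨j, -, hsucc, -⟩ := hK.step t ht
  exact hmono (hsucc ▸ Finset.subset_insert j (K t))

theorem IsGreedyRun.insert_le_succ [Preorder F] {f : Finset ι → F} {n : ℕ} {K : ℕ → Finset ι}
    (hK : IsGreedyRun f n K) (hmono : Monotone f) {t : ℕ} (ht : t < n) (i : ι) :
    f (insert i (K t)) ≤ f (K (t + 1)) := by
  by_cases hi : i ∈ K t
  · rw [Finset.insert_eq_of_mem hi]
    exact hK.le_succ hmono ht
  · obtain ⟨j, -, hsucc, hmax⟩ := hK.step t ht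
    exact hsucc ▸ hmax i hi

theorem IsSubmodular.union_sub_le_sum [AddCommGroup F] [PartialOrder F] [IsOrderedAddMonoid F]
    {f : Finset ι → F} (hf : IsSubmodular f) (A S : Finset ι) :
    f (A ∪ S) - f A ≤ ∑ i ∈ S, (f (insert i A) - f A) := by
  induction S using Finset.induction_on with
  | empty => simp
  | insert j S hj ih =>
    have hunion : A ∪ S ∪ insert j A = A ∪ insert j S := by grind
    have hinter : (A ∪ S) ∩ insert j A = A := by grind
    have hsub := hf (A ∪ S) (insert j A)
    rw [hunion, hinter] at hsub
    calc f (A ∪ insert j S) - f A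
        ≤ f (A ∪ S) + f (insert j A) - f A - f A :=
          sub_le_sub_right (le_sub_iff_add_le.2 hsub) _
      _ = f (insert j A) - f A + (f (A ∪ S) - f A) := by abel
      _ ≤ ∑ i ∈ insert j S, (f (insert i A) - f A) := by
          rw [Finset.sum_insert hj]
          gcongr

section Field

variable [Field F] [LinearOrder F] [IsStrictOrderedRing F] {f : Finset ι → F} {n k : ℕ}
  {K : ℕ → Finset ι} {S : Finset ι}

theorem IsGreedyRun.sub_le_mul_gain (hK : IsGreedyRun f n K) (hmono : Monotone f)
    (hsub : IsSubmodular f) (hS : S.card ≤ k) {t : ℕ} (ht : t < n) :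
    f S - f (K t) ≤ k * (f (K (t + 1)) - f (K t)) :=
  calc f S - f (K t)
      ≤ f (K t ∪ S) - f (K t) := by gcongr; exact hmono Finset.subset_union_right
    _ ≤ ∑ i ∈ S, (f (insert i (K t)) - f (K t)) := hsub.union_sub_le_sum _ _
    _ ≤ ∑ _i ∈ S, (f (K (t + 1)) - f (K t)) := by
        gcongr with i
        exact hK.insert_le_succ hmono ht i
    _ = S.card * (f (K (t + 1)) - f (K t)) := by rw [Finset.sum_const, nsmul_eq_mul]
    _ ≤ k * (f (K (t + 1)) - f (K t)) := by
        have hgain := sub_nonneg.2 (hK.le_succ hmono ht)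
        gcongr

theorem IsGreedyRun.sub_le_pow_mul_sub (hK : IsGreedyRun f n K) (hmono : Monotone f)
    (hsub : IsSubmodular f) (hS : S.card ≤ k) {t : ℕ} (ht : t ≤ n) :
    f S - f (K t) ≤ (1 - 1 / k) ^ t * (f S - f ∅) := by
  induction t with
  | zero => simp [hK.zero]
  | succ t ih =>
    have hgain : (f S - f (K t)) / k ≤ f (K (t + 1)) - f (K t) :=
      div_le_of_le_mul₀ k.cast_nonneg (sub_nonneg.2 (hK.le_succ hmono ht))
        (mul_comm (k : F) _ ▸ hK.sub_le_mul_gain hmono hsub hS ht)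
    have hratio : (0 : F) ≤ 1 - 1 / k := by
      rw [one_div, sub_nonneg]
      exact Nat.cast_inv_le_one k
    calc f S - f (K (t + 1))
        ≤ (1 - 1 / k) * (f S - f (K t)) := by linear_combination hgain
      _ ≤ (1 - 1 / k) * ((1 - 1 / k) ^ t * (f S - f ∅)) := by
          gcongr
          exact ih (Nat.le_of_succ_le ht)
      _ = (1 - 1 / k) ^ (t + 1) * (f S - f ∅) := by ring

end Field

theorem IsGreedyRun.one_sub_one_div_exp_mul_le {f : Finset ι → ℝ} {n : ℕ} {K : ℕ → Finset ι}
    {S : Finset ι} (hK : IsGreedyRun f n K) (hmono : Monotone f) (hsub : IsSubmodular f)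
    (hf : 0 ≤ f ∅) (hS : S.card ≤ n) : (1 - 1 / Real.exp 1) * f S ≤ f (K n) := by
  have hfS : f ∅ ≤ f S := hmono (Finset.empty_subset S)
  have hgap : f S - f (K n) ≤ 1 / Real.exp 1 * (f S - f ∅) := by
    rcases n.eq_zero_or_pos with rfl | hn
    · simp [Finset.card_eq_zero.1 (Nat.le_zero.1 hS), hK.zero]
    · calc f S - f (K n)
          ≤ (1 - 1 / n) ^ n * (f S - f ∅) := hK.sub_le_pow_mul_sub hmono hsub hS le_rfl
        _ ≤ 1 / Real.exp 1 * (f S - f ∅) := by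
            have hexp : (1 - 1 / (n : ℝ)) ^ n ≤ Real.exp (-1) :=
              Real.one_sub_div_pow_le_exp_neg (Nat.one_le_cast.2 hn)
            rw [one_div (Real.exp 1), ← Real.exp_neg]
            exact mul_le_mul_of_nonneg_right hexp (sub_nonneg.2 hfS)
  have hf_div : 0 ≤ 1 / Real.exp 1 * f ∅ := by positivity
  linarith

end Greedy

section LogDet

theorem add_sum_eq_add_sum_add_sum_sdiff {ι α : Type*} [DecidableEq ι] [AddCommMonoid α] (a : α)
    (p : ι → α) {K L : Finset ι} (hKL : K ⊆ L) :
    a + ∑ i ∈ L, p i = a + ∑ i ∈ K, p i + ∑ i ∈ L \ K, p i := by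
  rw [add_assoc, add_comm (∑ i ∈ K, p i), Finset.sum_sdiff hKL]

open scoped ComplexOrder MatrixOrder

theorem posDef_add_sum {𝕜 m ι : Type*} [RCLike 𝕜] {A : Matrix m m 𝕜} {P : ι → Matrix m m 𝕜}
    (hA : A.PosDef) (hP : ∀ i, (P i).PosSemidef) (K : Finset ι) : (A + ∑ i ∈ K, P i).PosDef :=
  hA.add_posSemidef (posSemidef_sum K fun i _ => hP i)

variable {𝕜 m ι : Type*} [RCLike 𝕜] [Fintype m] [DecidableEq m]

theorem posSemidef_inv_sub_inv_add {A P : Matrix m m 𝕜} (hA : A.PosDef) (hP : P.PosSemidef) :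
    (A⁻¹ - (A + P)⁻¹).PosSemidef := by
  have hAP : (A + P).PosDef := hA.add_posSemidef hP
  let := hA.inv.isUnit.invertible
  let := hAP.isUnit.invertible
  -- Both `A + P - A` and `A⁻¹ - (A + P)⁻¹` are Schur complements in `[[A + P, 1], [1, A⁻¹]]`.
  have hblock : (fromBlocks (A + P) 1 1ᴴ A⁻¹).PosSemidef := by
    rw [hA.inv.fromBlocks₂₂]
    simpa [nonsing_inv_nonsing_inv _ hA.det_pos.ne'.isUnit] using hP
  simpa using (hAP.fromBlocks₁₁ 1 A⁻¹).1 hblock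

theorem det_one_add_eq_prod_eigenvalues {P : Matrix m m 𝕜} (hP : P.IsHermitian) :
    (1 + P).det = ∏ i, (1 + (hP.eigenvalues i : 𝕜)) := by
  conv_lhs =>
    rw [hP.spectral_theorem, ← map_one (Unitary.conjStarAlgAut 𝕜 _ hP.eigenvectorUnitary),
      ← map_add, ← diagonal_one, diagonal_add, Unitary.conjStarAlgAut_apply, det_mul_right_comm]
  simp

theorem one_le_det_one_add {P : Matrix m m 𝕜} (hP : P.PosSemidef) : 1 ≤ (1 + P).det := by
  have heig (i : m) : (0 : 𝕜) ≤ hP.isHermitian.eigenvalues i :=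
    RCLike.ofReal_nonneg.2 (hP.eigenvalues_nonneg i)
  calc (1 : 𝕜) = ∏ _i : m, 1 := Finset.prod_const_one.symm
    _ ≤ ∏ i, (1 + (hP.isHermitian.eigenvalues i : 𝕜)) :=
      Finset.prod_le_prod (fun _ _ => zero_le_one) fun i _ => le_add_of_nonneg_right (heig i)
    _ = (1 + P).det := (det_one_add_eq_prod_eigenvalues hP.isHermitian).symm

theorem det_le_det_add {A P : Matrix m m 𝕜} (hA : A.PosDef) (hP : P.PosSemidef) :
    A.det ≤ (A + P).det := by
  obtain ⟨C, rfl⟩ := CStarAlgebra.nonneg_iff_eq_star_mul_self.1 hP.nonneg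
  rw [star_eq_conjTranspose, det_add_mul _ _ hA.det_pos.ne'.isUnit]
  exact le_mul_of_one_le_right hA.det_pos.le
    (one_le_det_one_add (hA.inv.posSemidef.mul_mul_conjTranspose_same C))

theorem det_mul_det_add_add_le {A P Q : Matrix m m 𝕜} (hA : A.PosDef) (hP : P.PosSemidef)
    (hQ : Q.PosSemidef) : A.det * (A + P + Q).det ≤ (A + P).det * (A + Q).det := by
  have hAP : (A + P).PosDef := hA.add_posSemidef hP
  obtain ⟨C, rfl⟩ := CStarAlgebra.nonneg_iff_eq_star_mul_self.1 hQ.nonneg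
  have hdet : (1 + C * (A + P)⁻¹ * Cᴴ).det ≤ (1 + C * A⁻¹ * Cᴴ).det := by
    have hone : (1 + C * (A + P)⁻¹ * Cᴴ).PosDef :=
      PosDef.one.add_posSemidef (hAP.inv.posSemidef.mul_mul_conjTranspose_same C)
    convert det_le_det_add hone
      ((posSemidef_inv_sub_inv_add hA hP).mul_mul_conjTranspose_same C) using 2
    noncomm_ring
  rw [star_eq_conjTranspose, det_add_mul _ _ hAP.det_pos.ne'.isUnit,
    det_add_mul _ _ hA.det_pos.ne'.isUnit, mul_left_comm]
  gcongr
  · exact hAP.det_pos.le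
  · exact hA.det_pos.le

/-- The set function `K ↦ log_b det (A + ∑ i ∈ K, Pᵢ)`, of which the uplink capacity is an instance.
It is meant for positive definite `A` and positive semidefinite `Pᵢ`, when the determinant is a
positive real number; taking its real part only makes it an element of `ℝ`. -/
noncomputable def logDetSum (b : ℝ) (A : Matrix m m 𝕜) (P : ι → Matrix m m 𝕜) (K : Finset ι) : ℝ :=
  Real.logb b (RCLike.re (A + ∑ i ∈ K, P i).det)

variable {b : ℝ} {A : Matrix m m 𝕜} {P : ι → Matrix m m 𝕜}

theorem logDetSum_one_empty (P : ι → Matrix m m 𝕜) : logDetSum b 1 P ∅ = 0 := by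
  simp [logDetSum]

theorem monotone_logDetSum (hb : 1 < b) (hA : A.PosDef) (hP : ∀ i, (P i).PosSemidef) :
    Monotone (logDetSum b A P) := by
  classical
  intro K L hKL
  have hdet := det_le_det_add (posDef_add_sum hA hP K) (posSemidef_sum (L \ K) fun i _ => hP i)
  rw [logDetSum, logDetSum, add_sum_eq_add_sum_add_sum_sdiff A P hKL]
  exact Real.logb_le_logb_of_le hb (RCLike.pos_iff.1 (posDef_add_sum hA hP K).det_pos).1
    (RCLike.le_iff_re_im.1 hdet).1

theorem det_union_mul_det_inter_le [DecidableEq ι] (hA : A.PosDef) (hP : ∀ i, (P i).PosSemidef)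
    (K L : Finset ι) :
    (A + ∑ i ∈ K ∪ L, P i).det * (A + ∑ i ∈ K ∩ L, P i).det ≤
      (A + ∑ i ∈ K, P i).det * (A + ∑ i ∈ L, P i).det := by
  have hK : A + ∑ i ∈ K, P i = A + ∑ i ∈ K ∩ L, P i + ∑ i ∈ K \ L, P i := by
    rw [add_sum_eq_add_sum_add_sum_sdiff A P Finset.inter_subset_left, Finset.sdiff_inter_self_left]
  have hL : A + ∑ i ∈ L, P i = A + ∑ i ∈ K ∩ L, P i + ∑ i ∈ L \ K, P i := by
    rw [add_sum_eq_add_sum_add_sum_sdiff A P Finset.inter_subset_right,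
      Finset.sdiff_inter_self_right]
  have hKL : A + ∑ i ∈ K ∪ L, P i = A + ∑ i ∈ K, P i + ∑ i ∈ L \ K, P i := by
    rw [add_sum_eq_add_sum_add_sum_sdiff A P Finset.subset_union_left, Finset.union_sdiff_left]
  rw [mul_comm, hKL, hK, hL]
  exact det_mul_det_add_add_le (posDef_add_sum hA hP _) (posSemidef_sum _ fun i _ => hP i)
    (posSemidef_sum _ fun i _ => hP i)

theorem isSubmodular_logDetSum [DecidableEq ι] (hb : 1 < b) (hA : A.PosDef)
    (hP : ∀ i, (P i).PosSemidef) : IsSubmodular (logDetSum b A P) := by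
  intro K L
  have hdet (S : Finset ι) := RCLike.pos_iff.1 (posDef_add_sum hA hP S).det_pos
  have hmul (S T : Finset ι) :
      RCLike.re ((A + ∑ i ∈ S, P i).det * (A + ∑ i ∈ T, P i).det) =
        RCLike.re (A + ∑ i ∈ S, P i).det * RCLike.re (A + ∑ i ∈ T, P i).det := by
    rw [RCLike.mul_re, (hdet S).2, zero_mul, sub_zero]
  have hre := (RCLike.le_iff_re_im.1 (det_union_mul_det_inter_le hA hP K L)).1
  rw [hmul, hmul] at hre
  have hlog (S T : Finset ι) := Real.logb_mul (b := b) (hdet S).1.ne' (hdet T).1.ne'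
  simp only [logDetSum, ← hlog]
  exact Real.logb_le_logb_of_le hb (mul_pos (hdet _).1 (hdet _).1) hre

end LogDet

section Capacity

open scoped ComplexOrder

theorem mul_eq_sum_vecMulVec {l m n α : Type*} [Fintype m] [NonUnitalNonAssocSemiring α]
    (A : Matrix l m α) (B : Matrix m n α) : A * B = ∑ i, vecMulVec (A.col i) (B.row i) := by
  ext a b
  simp [mul_apply, Matrix.sum_apply, vecMulVec_apply]

theorem det_one_add_diagonal_mul_mul_conjTranspose {m n α : Type*} [Fintype m] [DecidableEq m]
    [Fintype n] [DecidableEq n] [CommRing α] [StarRing α] (w : m → α) (B : Matrix m n α) :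
    (1 + diagonal w * (B * Bᴴ)).det =
      (1 + ∑ i, w i • vecMulVec (star (B.row i)) (B.row i)).det := by
  rw [← Matrix.mul_assoc, det_one_add_mul_comm, mul_eq_sum_vecMulVec]
  congr! 3 with i
  ext a b
  simp [vecMulVec_apply]
  ring

variable {N M : ℕ} (H : Matrix (Fin N) (Fin M) ℂ) {ρ α : ℝ} {d : Fin N → ℝ}

/-- The contribution `ρα dᵢ⁻¹ fᵢ fᵢᴴ` of antenna `i` to the `M × M` form of the capacity
determinant; `fᵢᴴ` is the row `H i`. -/
noncomputable def antennaGram (ρ α : ℝ) (d : Fin N → ℝ) (i : Fin N) : Matrix (Fin M) (Fin M) ℂ :=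
  ((ρ * α / d i : ℝ) : ℂ) • vecMulVec (star (H i)) (H i)

theorem posSemidef_antennaGram (hρα : 0 ≤ ρ * α) (hd : ∀ i, 0 < d i) (i : Fin N) :
    (antennaGram H ρ α d i).PosSemidef :=
  (posSemidef_vecMulVec_star_self (H i)).smul
    (Complex.zero_le_real.2 (div_nonneg hρα (hd i).le))

theorem stmt11.R_eq_logDetSum (hd : ∀ i, d i ≠ 0) :
    stmt11.R H ρ α d = logDetSum 2 1 (antennaGram H ρ α d) := by
  funext K
  have hdiag : ((ρ : ℂ) * α) • (diagonal fun i : K => (d i : ℂ))⁻¹ =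
      diagonal fun i : K => ((ρ * α / d i : ℝ) : ℂ) := by
    have hinv : (diagonal fun i : K => (d i : ℂ))⁻¹ = diagonal fun i : K => (d i : ℂ)⁻¹ :=
      inv_eq_left_inv (by simp [diagonal_mul_diagonal, hd])
    rw [hinv, ← diagonal_smul]
    congr 1 with i
    simp [div_eq_mul_inv]
  rw [stmt11.R, hdiag, det_one_add_diagonal_mul_mul_conjTranspose, logDetSum]
  congr 4
  exact Finset.sum_coe_sort K (antennaGram H ρ α d)

theorem one_add_mul_sum_norm_sq_pos {n E : Type*} [Fintype n] [SeminormedAddGroup E] (hρ : 0 ≤ ρ)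
    (hα : α ≤ 1) (f : n → E) : 0 < 1 + ρ * (1 - α) * ∑ j, ‖f j‖ ^ 2 := by
  have := sub_nonneg.2 hα
  positivity

theorem stmt11_general (hρα : 0 ≤ ρ * α) (hd : ∀ i, 0 < d i) {n : ℕ}
    {K : ℕ → Finset (Fin N)} (hK : IsGreedyRun (stmt11.R H ρ α d) n K) {S : Finset (Fin N)}
    (hS : S.card ≤ n) :
    (1 - 1 / Real.exp 1) * stmt11.R H ρ α d S ≤ stmt11.R H ρ α d (K n) := by
  have hR := stmt11.R_eq_logDetSum H (ρ := ρ) (α := α) fun i => (hd i).ne'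
  have hP := posSemidef_antennaGram H hρα hd
  rw [hR] at hK ⊢
  exact hK.one_sub_one_div_exp_mul_le (monotone_logDetSum one_lt_two PosDef.one hP)
    (isSubmodular_logDetSum one_lt_two PosDef.one hP) (logDetSum_one_empty _).ge hS

end Capacity

/-- For the quantized uplink capacity set function
`R(K) = log₂ det(I + ρα (D_K)⁻¹ H_K H_Kᴴ)` with `dᵢ = 1 + ρ(1-α)‖fᵢ‖²`, the greedy (QFAS)
subset `K_G = K N_r` obtained by adding at each step an antenna maximizing the capacity
satisfies `R(K_G) ≥ (1 - 1/e) R(K*)`, where `K*` maximizes `R` over all subsets of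
cardinality `N_r`. -/
theorem stmt11 (N M : ℕ) (H : Matrix (Fin N) (Fin M) ℂ) (ρ α : ℝ) (hρ : 0 < ρ)
    (hα : α ∈ Set.Ioo (0 : ℝ) 1)
    (d : Fin N → ℝ) (hd : ∀ i, d i = 1 + ρ * (1 - α) * ∑ j, ‖H i j‖ ^ 2)
    (Nr : ℕ) (hNr : Nr ≤ N)
    (K : ℕ → Finset (Fin N)) (hK0 : K 0 = ∅)
    (hgreedy : ∀ t < Nr, ∃ j ∉ K t, K (t + 1) = insert j (K t) ∧
      ∀ j' ∉ K t, stmt11.R H ρ α d (insert j' (K t)) ≤ stmt11.R H ρ α d (insert j (K t)))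
    (Kstar : Finset (Fin N)) (hcard : Kstar.card = Nr)
    (hopt : ∀ B : Finset (Fin N), B.card = Nr → stmt11.R H ρ α d B ≤ stmt11.R H ρ α d Kstar) :
    (1 - 1 / Real.exp 1) * stmt11.R H ρ α d Kstar ≤ stmt11.R H ρ α d (K Nr) :=
  stmt11_general H (mul_pos hρ hα.1).le
    (fun i => hd i ▸ one_add_mul_sum_norm_sq_pos hρ.le hα.2.le (H i)) ⟨hK0, hgreedy⟩ hcard.le
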